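/- (Characterization of the ML set, equation (16) in the proof of Proposition III.1) Assume: Γ ℓ k ≥ 0 for all ℓ, k; for every ℓ and every k ≠ ℓ, Γ ℓ k < Γ ℓ ℓ (the diagonal is the unique row maximum); Γ (ω̃ t) (ω̃ t) > 0 for every t : Fin T; and there exists g* : Fin K → ℝ with Q ((P.mulVec g*) t + σ²) = ω̃ t for all t. Then a vector g : Fin K → ℝ maximizes the likelihood L(g) = ∏_{t} Γ (ω̃ t) (Q ((P.mulVec g) t + σ²)) over ℝ^K if and only if Q ((P.mulVec g) t + σ²) = ω̃ t for every t : Fin T. -/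

import Mathlib

/-!
Since no factor of the likelihood `∏ t, Γ (ω t) (q t)` is negative and each is uniquely maximized
by `q t = ω t`, the sequence `q = ω` is its unique maximizer. This strict maximum is assumed to be
attained by some channel vector, so the maximizing channel vectors are exactly the preimage of `ω`.
-/

theorem prod_lt_prod_of_nonneg_of_pos {ι R : Type*} [CommMonoidWithZero R] [PartialOrder R]
    [ZeroLEOneClass R] [PosMulStrictMono R] {s : Finset ι} {a b : ι → R}
    (ha : ∀ i ∈ s, 0 ≤ a i) (hb : ∀ i ∈ s, 0 < b i) (hle : ∀ i ∈ s, a i ≤ b i)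
    (hlt : ∃ i ∈ s, a i < b i) : ∏ i ∈ s, a i < ∏ i ∈ s, b i := by
  have : Nontrivial R := hlt.elim fun i hi => nontrivial_of_lt (a i) (b i) hi.2
  by_cases hzero : ∃ i ∈ s, a i = 0
  · obtain ⟨i, hi, hai⟩ := hzero
    rw [Finset.prod_eq_zero hi hai]
    exact Finset.prod_pos hb
  · push Not at hzero
    exact Finset.prod_lt_prod (fun i hi => (ha i hi).lt_of_ne' (hzero i hi)) hle hlt

theorem le_of_forall_ne_lt {Y R : Type*} [Preorder R] {f : Y → R} {y : Y}
    (hf : ∀ z, z ≠ y → f z < f y) (z : Y) : f z ≤ f y := by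
  rcases eq_or_ne z y with rfl | hne
  · exact le_rfl
  · exact (hf z hne).le

theorem forall_comp_le_iff_eq_of_forall_ne_lt {X Y R : Type*} [Preorder R] {f : Y → R} {y : Y}
    (hf : ∀ z, z ≠ y → f z < f y) {φ : X → Y} (hy : ∃ x, φ x = y) (x : X) :
    (∀ x', f (φ x') ≤ f (φ x)) ↔ φ x = y := by
  obtain ⟨x₀, rfl⟩ := hy
  constructor
  · intro hmax
    by_contra hne
    exact (hf _ hne).not_ge (hmax x₀)
  · intro hx x'
    rw [hx]
    exact le_of_forall_ne_lt hf (φ x')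

section Feedback

variable {ι α R : Type*} [Fintype ι]

/-- The likelihood of decoding the level sequence `ω` when the sequence `q` is sent over the
memoryless channel `Γ`; as in the paper, the first argument of `Γ` is the decoded level. -/
def feedbackLikelihood [CommMonoid R] (Γ : α → α → R) (ω q : ι → α) : R :=
  ∏ t, Γ (ω t) (q t)

variable [CommMonoidWithZero R] [PartialOrder R] [ZeroLEOneClass R] [PosMulStrictMono R]
  {Γ : α → α → R} {ω : ι → α}

theorem feedbackLikelihood_lt_self_of_ne (hnonneg : ∀ t k, 0 ≤ Γ (ω t) k)
    (hdiag : ∀ t k, k ≠ ω t → Γ (ω t) k < Γ (ω t) (ω t)) {q : ι → α} (hq : q ≠ ω) :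
    feedbackLikelihood Γ ω q < feedbackLikelihood Γ ω ω := by
  obtain ⟨s, hs⟩ := Function.ne_iff.mp hq
  -- A mismatch exhibits two distinct levels, so each diagonal entry exceeds a nonnegative one.
  have : Nontrivial α := ⟨q s, ω s, hs⟩
  have hpos (t : ι) : 0 < Γ (ω t) (ω t) := by
    obtain ⟨k, hk⟩ := exists_ne (ω t)
    exact (hnonneg t k).trans_lt (hdiag t k hk)
  exact prod_lt_prod_of_nonneg_of_pos (fun t _ => hnonneg t (q t)) (fun t _ => hpos t)
    (fun t _ => le_of_forall_ne_lt (hdiag t) (q t)) ⟨s, Finset.mem_univ s, hdiag s (q s) hs⟩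

theorem ml_set_characterization_general {X : Type*} (level : X → ι → α)
    (hnonneg : ∀ t k, 0 ≤ Γ (ω t) k)
    (hdiag : ∀ t k, k ≠ ω t → Γ (ω t) k < Γ (ω t) (ω t))
    (hexists : ∃ x, level x = ω) (x : X) :
    (∀ x', feedbackLikelihood Γ ω (level x') ≤ feedbackLikelihood Γ ω (level x)) ↔
      level x = ω :=
  forall_comp_le_iff_eq_of_forall_ne_lt (f := feedbackLikelihood Γ ω)
    (fun _ hq => feedbackLikelihood_lt_self_of_ne hnonneg hdiag hq) hexists x

end Feedback

/-- Characterization of the ML set (equation (16) in the proof of Proposition III.1):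
under strict diagonal dominance of the DMC rows, a channel vector maximizes the
likelihood iff its noiseless received powers quantize to the observed feedback. -/
theorem ml_set_characterization
    (M T K : ℕ) (hM : 0 < M) (hT : 0 < T) (hK : 0 < K)
    (Γ : Fin M → Fin M → ℝ) (Q : ℝ → Fin M)
    (P : Matrix (Fin T) (Fin K) ℝ) (σ2 : ℝ) (ω' : Fin T → Fin M)
    (hΓnonneg : ∀ ℓ k : Fin M, 0 ≤ Γ ℓ k)
    (hΓdiag : ∀ ℓ k : Fin M, k ≠ ℓ → Γ ℓ k < Γ ℓ ℓ)
    (hΓpos : ∀ t : Fin T, 0 < Γ (ω' t) (ω' t))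
    (hexists : ∃ gstar : Fin K → ℝ, ∀ t : Fin T, Q (P.mulVec gstar t + σ2) = ω' t) :
    ∀ g : Fin K → ℝ,
      (∀ g' : Fin K → ℝ,
          ∏ t : Fin T, Γ (ω' t) (Q (P.mulVec g' t + σ2))
            ≤ ∏ t : Fin T, Γ (ω' t) (Q (P.mulVec g t + σ2)))
        ↔ ∀ t : Fin T, Q (P.mulVec g t + σ2) = ω' t := by
  intro g
  rw [← funext_iff]
  exact ml_set_characterization_general (fun g t => Q (P.mulVec g t + σ2))
    (fun t => hΓnonneg (ω' t)) (fun t => hΓdiag (ω' t))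
    (hexists.imp fun _ => funext) g
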